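/- Let p > N ≥ 2, R > 0, and γ₀ = 2^{N-p}·(2^{(p-N)/(p-1)} − 1)^{p-1}. For the punctured ball Ḃ_R = B_R∖{0}, one has R_{p,γ}(Ḃ_R) > r_{Ḃ_R} for every γ₀ ≤ γ < 1; in fact R_{p,γ₀}(Ḃ_R) = R while r_{Ḃ_R} = R/2. -/

import Mathlib

open MeasureTheory Filter
open scoped ENNReal

noncomputable section

/-- Relative `p`-capacity of a compact set `K` inside an open set `E`:
infimum of the `p`-Dirichlet energy over smooth compactly supported functions
in `E` which are at least `1` on `K`. -/
noncomputable def pCapacity {N : ℕ} (p : ℝ) (K E : Set (EuclideanSpace ℝ (Fin N))) : ℝ :=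
  sInf {c : ℝ | ∃ φ : EuclideanSpace ℝ (Fin N) → ℝ, ContDiff ℝ (⊤ : ℕ∞) φ ∧ HasCompactSupport φ ∧
    tsupport φ ⊆ E ∧ (∀ x ∈ K, 1 ≤ φ x) ∧ c = ∫ x, ‖fderiv ℝ φ x‖ ^ p}

/-- `closedBall x₀ r \ Ω` is `(p,γ)`-negligible. -/
def IsNegligible {N : ℕ} (p γ : ℝ) (Ω : Set (EuclideanSpace ℝ (Fin N)))
    (x₀ : EuclideanSpace ℝ (Fin N)) (r : ℝ) : Prop :=
  pCapacity p (Metric.closedBall x₀ r \ Ω) (Metric.ball x₀ (2*r)) ≤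
    γ * pCapacity p (Metric.closedBall x₀ r) (Metric.ball x₀ (2*r))

/-- The `(p,γ)`-capacitary inradius of an open set, as an extended nonnegative real. -/
noncomputable def capInradius {N : ℕ} (p γ : ℝ) (Ω : Set (EuclideanSpace ℝ (Fin N))) : ℝ≥0∞ :=
  sSup {ρ : ℝ≥0∞ | ∃ r : ℝ, 0 < r ∧ ρ = ENNReal.ofReal r ∧
    ∃ x₀ : EuclideanSpace ℝ (Fin N), IsNegligible p γ Ω x₀ r}

/-- The classical inradius, as an extended nonnegative real. -/
noncomputable def eInradius {N : ℕ} (Ω : Set (EuclideanSpace ℝ (Fin N))) : ℝ≥0∞ :=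
  sSup {ρ : ℝ≥0∞ | ∃ r : ℝ, 0 < r ∧ ρ = ENNReal.ofReal r ∧
    ∃ x₀ : EuclideanSpace ℝ (Fin N), Metric.ball x₀ r ⊆ Ω}


open Set in
/-- Radial profile derivative. -/
lemma profile1D (n : ℕ) (p β a b δ : ℝ) (hp : 1 < p) (hβ : β * (p - 1) = n) (ha : 0 ≤ a)
    (hδ : 0 < δ) (hab : a + δ < b - δ) :
    ∃ g : ℝ → ℝ, ContDiff ℝ (⊤ : ℕ∞) g ∧ (∀ s, 0 ≤ g s) ∧ (∀ s, s ≤ a + δ / 2 → g s = 0) ∧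
      (∀ s, b - δ / 2 ≤ s → g s = 0) ∧ (∫ s in a..b, g s = 1) ∧
      ∫ s in Ioi (0:ℝ), s ^ n * (g s) ^ p ≤ (∫ s in (a+δ)..(b-δ), s ^ (-β)) ^ (1 - p) := by
  let χ : ContDiffBump ((a + b) / 2) :=
    { rIn := (b - a) / 2 - δ, rOut := (b - a) / 2 - δ / 2,
      rIn_pos := by linarith, rIn_lt_rOut := by linarith }
  have hχ0 : ∀ s, s ≤ a + δ / 2 → χ s = 0 := by
    intro s hs
    apply χ.zero_of_le_dist
    rw [Real.dist_eq, abs_sub_comm]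
    refine le_trans ?_ (le_abs_self _)
    change (b - a) / 2 - δ / 2 ≤ _
    linarith
  have hχ1 : ∀ s, b - δ / 2 ≤ s → χ s = 0 := by
    intro s hs
    apply χ.zero_of_le_dist
    rw [Real.dist_eq]
    refine le_trans ?_ (le_abs_self _)
    change (b - a) / 2 - δ / 2 ≤ _
    linarith
  have hχ2 : ∀ s, a + δ ≤ s → s ≤ b - δ → χ s = 1 := by
    intro s hs hs'
    apply χ.one_of_mem_closedBall
    rw [Metric.mem_closedBall, Real.dist_eq, abs_le]
    change -((b - a) / 2 - δ) ≤ _ ∧ _ ≤ (b - a) / 2 - δ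
    constructor <;> linarith
  let k : ℝ → ℝ := fun s => χ s * s ^ (-β)
  have hk : ContDiff ℝ (⊤ : ℕ∞) k := by
    rw [contDiff_iff_contDiffAt]
    intro s
    rcases lt_or_ge 0 s with hs | hs
    · exact χ.contDiffAt.mul (Real.contDiffAt_rpow_const_of_ne hs.ne')
    · have : k =ᶠ[nhds s] fun _ => 0 := by
        filter_upwards [Iio_mem_nhds (show s < a + δ / 2 by linarith)] with t ht
        simp [k, hχ0 t (le_of_lt ht)]
      exact contDiffAt_const.congr_of_eventuallyEq this
  have hk0 : ∀ s, 0 ≤ k s := by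
    intro s
    rcases lt_or_ge 0 s with hs | hs
    · exact mul_nonneg χ.nonneg (Real.rpow_nonneg hs.le _)
    · simp [k, hχ0 s (by linarith)]
  set I : ℝ := ∫ s in a..b, k s with hI
  set J : ℝ := ∫ s in (a+δ)..(b-δ), s ^ (-β) with hJ
  have hJpos : 0 < J := by
    apply intervalIntegral.intervalIntegral_pos_of_pos_on _ _ hab
    · apply ContinuousOn.intervalIntegrable
      intro s hs
      rw [uIcc_of_le hab.le] at hs
      exact (Real.continuousAt_rpow_const _ _ (Or.inl (by linarith [hs.1]))).continuousWithinAt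
    · intro s hs
      exact Real.rpow_pos_of_pos (by linarith [hs.1]) _
  have hJI : J ≤ I := by
    have h1 : J = ∫ s in (a+δ)..(b-δ), k s := by
      apply intervalIntegral.integral_congr
      intro s hs
      rw [uIcc_of_le hab.le] at hs
      simp [k, hχ2 s hs.1 hs.2]
    rw [h1, hI]
    apply intervalIntegral.integral_mono_interval (by linarith) hab.le (by linarith)
    · exact Eventually.of_forall hk0
    · exact hk.continuous.intervalIntegrable _ _
  have hIpos : 0 < I := hJpos.trans_le hJI
  have hsupp : Function.support k ⊆ Ioc a b := by
    intro s hs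
    by_contra hc
    apply hs
    rw [mem_Ioc, not_and_or, not_lt, not_le] at hc
    rcases hc with hc | hc
    · simp [k, hχ0 s (by linarith)]
    · simp [k, hχ1 s (by linarith)]
  have hIoi : ∫ s in Ioi (0:ℝ), k s = I := by
    rw [hI, intervalIntegral.integral_eq_integral_of_support_subset hsupp]
    apply setIntegral_eq_integral_of_forall_compl_eq_zero
    intro s hs
    simp [k, hχ0 s (by simp at hs; linarith)]
  have hkint : Integrable k := by
    apply hk.continuous.integrable_of_hasCompactSupport
    apply HasCompactSupport.intro (isCompact_Icc (a := a) (b := b))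
    intro s hs
    by_contra hc
    exact hs (Ioc_subset_Icc_self (hsupp hc))
  refine ⟨fun s => k s / I, hk.div_const _, fun s => div_nonneg (hk0 s) hIpos.le, ?_, ?_, ?_, ?_⟩
  · intro s hs; simp [k, hχ0 s hs]
  · intro s hs; simp [k, hχ1 s hs]
  · rw [intervalIntegral.integral_div, ← hI, div_self hIpos.ne']
  · calc ∫ s in Ioi (0:ℝ), s ^ n * (k s / I) ^ p ≤ ∫ s in Ioi (0:ℝ), k s / I ^ p := by
          apply integral_mono_of_nonneg
          · filter_upwards [ae_restrict_mem measurableSet_Ioi] with s hs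
            exact mul_nonneg (pow_nonneg (le_of_lt hs) _)
              (Real.rpow_nonneg (div_nonneg (hk0 s) hIpos.le) _)
          · exact (hkint.div_const _).integrableOn
          · filter_upwards [ae_restrict_mem measurableSet_Ioi] with s hs
            have hs : 0 < s := hs
            rw [Real.div_rpow (hk0 s) hIpos.le, ← mul_div_assoc]
            gcongr
            simp only [k]
            rw [Real.mul_rpow χ.nonneg (Real.rpow_nonneg hs.le _), ← Real.rpow_natCast, ← hβ,
              ← Real.rpow_mul hs.le, mul_left_comm, ← Real.rpow_add hs]
            have : β * (p - 1) + -β * p = -β := by ring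
            rw [this]
            apply mul_le_mul_of_nonneg_right _ (Real.rpow_nonneg hs.le _)
            exact Real.rpow_le_self_of_le_one χ.nonneg χ.le_one hp.le
      _ = I ^ (1 - p) := by
          rw [integral_div, hIoi, Real.rpow_sub hIpos, Real.rpow_one]
      _ ≤ J ^ (1 - p) := Real.rpow_le_rpow_of_nonpos hJpos hJI (by linarith)

open Set in
lemma upper_test (N : ℕ) (p β a b δ : ℝ) (hN : 2 ≤ N) (hp : 1 < p)
    (hβ : β * (p - 1) = (N - 1 : ℕ)) (ha : 0 ≤ a)
    (hδ : 0 < δ) (hab : a + δ < b - δ) (x₀ : EuclideanSpace ℝ (Fin N)) :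
    ∃ φ : EuclideanSpace ℝ (Fin N) → ℝ, ContDiff ℝ (⊤ : ℕ∞) φ ∧ HasCompactSupport φ ∧
      tsupport φ ⊆ Metric.ball x₀ b ∧ (∀ x ∈ Metric.closedBall x₀ a, 1 ≤ φ x) ∧
      ∫ x, ‖fderiv ℝ φ x‖ ^ p ≤
        (N * volume.real (Metric.ball (0 : EuclideanSpace ℝ (Fin N)) 1)) *
          (∫ s in (a+δ)..(b-δ), s ^ (-β)) ^ (1 - p) := by
  obtain ⟨g, hg, hg0, hga, hgb, hgI, hgE⟩ := profile1D (N - 1) p β a b δ hp hβ ha hδ hab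
  have hNt : Nontrivial (EuclideanSpace ℝ (Fin N)) := by
    have : Nonempty (Fin N) := ⟨⟨0, by omega⟩⟩
    infer_instance
  let f : ℝ → ℝ := fun s => 1 - ∫ t in a..s, g t
  have hfd : ∀ s, HasDerivAt f (-g s) s := by
    intro s
    have := (hg.continuous.integral_hasStrictDerivAt a s).hasDerivAt
    exact this.const_sub 1
  have hf : ContDiff ℝ (⊤ : ℕ∞) f := by
    rw [contDiff_infty_iff_deriv]
    refine ⟨fun s => (hfd s).differentiableAt, ?_⟩
    have : deriv f = fun s => -g s := funext fun s => (hfd s).deriv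
    rw [this]; exact hg.neg
  have hf1 : ∀ s, s ≤ a + δ / 2 → f s = 1 := by
    intro s hs
    have : ∫ t in a..s, g t = ∫ t in a..s, (0:ℝ) := by
      apply intervalIntegral.integral_congr
      intro t ht
      apply hga
      have := ht.2
      exact this.trans (max_le (by linarith) hs)
    simp [f, this]
  have hf0 : ∀ s, b - δ / 2 ≤ s → f s = 0 := by
    intro s hs
    have h1 : ∫ t in b..s, g t = ∫ t in b..s, (0:ℝ) := by
      apply intervalIntegral.integral_congr
      intro t ht
      apply hgb
      have := ht.1
      exact (le_min (by linarith) hs).trans this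
    have h2 := intervalIntegral.integral_add_adjacent_intervals
      (hg.continuous.intervalIntegrable (μ := volume) a b)
      (hg.continuous.intervalIntegrable (μ := volume) b s)
    simp [f, ← h2, h1, hgI]
  let φ : EuclideanSpace ℝ (Fin N) → ℝ := fun x => f ‖x - x₀‖
  have hφ : ContDiff ℝ (⊤ : ℕ∞) φ := by
    rw [contDiff_iff_contDiffAt]
    intro x
    by_cases hx : x - x₀ = 0
    · have : φ =ᶠ[nhds x] fun _ => 1 := by
        have hc : ContinuousAt (fun y : EuclideanSpace ℝ (Fin N) => ‖y - x₀‖) x := by fun_prop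
        have := hc.eventually_lt (continuousAt_const (y := a + δ / 2)) (by rw [hx, norm_zero]; linarith)
        filter_upwards [this] with t ht
        exact hf1 _ (le_of_lt ht)
      exact contDiffAt_const.congr_of_eventuallyEq this
    · exact hf.contDiffAt.comp x ((contDiffAt_id.sub contDiffAt_const).norm ℝ hx)
  have hts : tsupport φ ⊆ Metric.closedBall x₀ (b - δ / 2) := by
    apply closure_minimal _ Metric.isClosed_closedBall
    intro x hx
    by_contra hc
    apply hx
    rw [Metric.mem_closedBall, not_le, dist_eq_norm] at hc
    exact hf0 _ hc.le
  have hcs : HasCompactSupport φ := (isCompact_closedBall _ _).of_isClosed_subset (isClosed_tsupport _) hts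
  refine ⟨φ, hφ, hcs, hts.trans (Metric.closedBall_subset_ball (by linarith)), ?_, ?_⟩
  · intro x hx
    rw [Metric.mem_closedBall, dist_eq_norm] at hx
    exact (hf1 _ (by linarith)).ge
  · have hbd : ∀ x, ‖fderiv ℝ φ x‖ ≤ g ‖x - x₀‖ := by
      intro x
      by_cases hx : x - x₀ = 0
      · have : φ =ᶠ[nhds x] fun _ => 1 := by
          have hc : ContinuousAt (fun y : EuclideanSpace ℝ (Fin N) => ‖y - x₀‖) x := by fun_prop
          have := hc.eventually_lt (continuousAt_const (y := a + δ / 2)) (by rw [hx, norm_zero]; linarith)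
          filter_upwards [this] with t ht
          exact hf1 _ (le_of_lt ht)
        rw [this.fderiv_eq]
        simpa using hg0 _
      · have hd : DifferentiableAt ℝ (fun y : EuclideanSpace ℝ (Fin N) => ‖y - x₀‖) x :=
          ((contDiffAt_id.sub contDiffAt_const).norm (n := 1) ℝ hx).differentiableAt (by simp)
        have h1 := (hfd ‖x - x₀‖).comp_hasFDerivAt x hd.hasFDerivAt
        have h2 : fderiv ℝ φ x = _ := h1.fderiv
        rw [h2, norm_smul, norm_neg, Real.norm_of_nonneg (hg0 _)]
        have h3 : ‖fderiv ℝ (fun y : EuclideanSpace ℝ (Fin N) => ‖y - x₀‖) x‖ ≤ (1 : NNReal) := by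
          apply norm_fderiv_le_of_lipschitz
          apply LipschitzWith.of_dist_le_mul
          intro y z
          simp only [NNReal.coe_one, one_mul, Real.dist_eq]
          refine (abs_norm_sub_norm_le _ _).trans ?_
          rw [dist_eq_norm]; simp
        exact mul_le_of_le_one_right (hg0 _) (by simpa using h3)
    have hp0 : 0 ≤ p := by linarith
    have hcont : Continuous fun x : EuclideanSpace ℝ (Fin N) => (g ‖x - x₀‖) ^ p :=
      (hg.continuous.comp (by fun_prop)).rpow_const (fun _ => Or.inr hp0)
    have hint : Integrable fun x : EuclideanSpace ℝ (Fin N) => (g ‖x - x₀‖) ^ p := by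
      apply hcont.integrable_of_hasCompactSupport
      apply HasCompactSupport.intro (isCompact_closedBall x₀ b)
      intro x hx
      rw [Metric.mem_closedBall, not_le, dist_eq_norm] at hx
      rw [hgb _ (by linarith), Real.zero_rpow (by linarith)]
    calc ∫ x, ‖fderiv ℝ φ x‖ ^ p ≤ ∫ x : EuclideanSpace ℝ (Fin N), (g ‖x - x₀‖) ^ p := by
          apply integral_mono_of_nonneg (Eventually.of_forall fun x => by positivity) hint
          exact Eventually.of_forall fun x => Real.rpow_le_rpow (norm_nonneg _) (hbd x) hp0
      _ = ∫ x : EuclideanSpace ℝ (Fin N), (g ‖x‖) ^ p :=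
          integral_sub_right_eq_self (fun x : EuclideanSpace ℝ (Fin N) => (g ‖x‖) ^ p) x₀
      _ = (N * volume.real (Metric.ball (0 : EuclideanSpace ℝ (Fin N)) 1)) *
          ∫ s in Ioi (0:ℝ), s ^ (N - 1) * (g s) ^ p := by
          rw [integral_fun_norm_addHaar volume (fun s => (g s) ^ p)]
          simp [mul_assoc]
      _ ≤ _ := by gcongr


lemma tangent_ineq (n : ℕ) (p β s H t : ℝ) (hp : 1 < p) (hβ : β * (p - 1) = n) (hs : 0 < s)
    (hH : 0 < H) (ht : 0 ≤ t) :
    H ^ (1 - p) * (p * t - (p - 1) * (s ^ (-β) / H)) ≤ s ^ n * t ^ p := by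
  have hh : 0 < s ^ (-β) := Real.rpow_pos_of_pos hs _
  set c := s ^ (-β) / H with hc
  have hcpos : 0 < c := div_pos hh hH
  have h1 := one_add_mul_self_le_rpow_one_add (s := t / c - 1) (by
    have : 0 ≤ t / c := by positivity
    linarith) hp.le
  rw [add_sub_cancel, Real.div_rpow ht hcpos.le, le_div_iff₀ (Real.rpow_pos_of_pos hcpos _)] at h1
  have h2 : s ^ n * c ^ (p - 1) = H ^ (1 - p) := by
    rw [hc, Real.div_rpow hh.le hH.le, ← Real.rpow_mul hs.le, ← Real.rpow_natCast, ← hβ,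
      ← mul_div_assoc, ← Real.rpow_add hs]
    have : β * (p - 1) + -β * (p - 1) = 0 := by ring
    rw [this, Real.rpow_zero, one_div, ← Real.rpow_neg hH.le]
    congr 1; ring
  have h3 : c ^ p = c ^ (p - 1) * c := by
    rw [Real.rpow_sub_one hcpos.ne']; field_simp
  calc H ^ (1 - p) * (p * t - (p - 1) * c) = s ^ n * (c ^ (p - 1) * (p * t - (p - 1) * c)) := by
        rw [← h2]; ring
    _ = s ^ n * ((1 + p * (t / c - 1)) * c ^ p) := by
        rw [h3]; field_simp; ring
    _ ≤ s ^ n * t ^ p := by gcongr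

lemma intInt_rpow {a b β : ℝ} (ha : 0 < a) (hab : a < b) :
    IntervalIntegrable (fun s : ℝ => s ^ (-β)) volume a b := by
  apply ContinuousOn.intervalIntegrable
  intro s hs
  rw [Set.uIcc_of_le hab.le] at hs
  exact (Real.continuousAt_rpow_const _ _ (Or.inl (by linarith [hs.1]))).continuousWithinAt

lemma int_rpow_pos {a b β : ℝ} (ha : 0 < a) (hab : a < b) :
    0 < ∫ s in a..b, s ^ (-β) := by
  apply intervalIntegral.intervalIntegral_pos_of_pos_on (intInt_rpow ha hab) _ hab
  intro s hs
  exact Real.rpow_pos_of_pos (by linarith [hs.1]) _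

open Set in
lemma ray_lower (N : ℕ) (p β a b : ℝ) (hp : 1 < p)
    (hβ : β * (p - 1) = (N - 1 : ℕ)) (ha : 0 < a) (hab : a < b)
    (x₀ θ : EuclideanSpace ℝ (Fin N)) (hθ : ‖θ‖ = 1) (φ : EuclideanSpace ℝ (Fin N) → ℝ)
    (hφ : ContDiff ℝ (⊤ : ℕ∞) φ) (hts : tsupport φ ⊆ Metric.ball x₀ b)
    (h1 : 1 ≤ φ (x₀ + a • θ)) :
    (∫ s in a..b, s ^ (-β)) ^ (1 - p) ≤
      ∫ s in Ioi (0:ℝ), s ^ (N - 1) * ‖fderiv ℝ φ (x₀ + s • θ)‖ ^ p := by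
  set H := ∫ s in a..b, s ^ (-β) with hH
  have hHpos : 0 < H := int_rpow_pos ha hab
  have hcd : Continuous (fderiv ℝ φ) := hφ.continuous_fderiv (by simp)
  have hcf : Continuous fun s : ℝ => fderiv ℝ φ (x₀ + s • θ) := hcd.comp (by fun_prop)
  have hcont : Continuous fun s : ℝ => s ^ (N - 1) * ‖fderiv ℝ φ (x₀ + s • θ)‖ ^ p :=
    (by fun_prop : Continuous fun s : ℝ => s ^ (N - 1)).mul
      (hcf.norm.rpow_const fun _ => Or.inr (by linarith))
  have hz : ∀ s, b ≤ |s| → x₀ + s • θ ∉ tsupport φ := by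
    intro s hs hc
    have := hts hc
    simp [norm_smul, hθ] at this
    linarith
  have hint : Integrable fun s : ℝ => s ^ (N - 1) * ‖fderiv ℝ φ (x₀ + s • θ)‖ ^ p := by
    apply hcont.integrable_of_hasCompactSupport
    apply HasCompactSupport.intro (isCompact_Icc (a := -b) (b := b))
    intro s hs
    have : fderiv ℝ φ (x₀ + s • θ) = 0 := by
      by_contra hc
      refine hz s ?_ (support_fderiv_subset ℝ hc)
      by_contra h
      exact hs (abs_le.1 (not_le.1 h).le)
    rw [this, norm_zero, Real.zero_rpow (by linarith), mul_zero]
  have hd : ∀ s : ℝ, HasDerivAt (fun s : ℝ => φ (x₀ + s • θ)) (fderiv ℝ φ (x₀ + s • θ) θ) s := by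
    intro s
    have h2 : HasDerivAt (fun s : ℝ => x₀ + s • θ) θ s := by
      simpa using ((hasDerivAt_id s).smul_const θ).const_add x₀
    exact ((hφ.differentiable (by simp)) _).hasFDerivAt.comp_hasDerivAt s h2
  have hdc : Continuous fun s : ℝ => fderiv ℝ φ (x₀ + s • θ) θ := hcf.clm_apply continuous_const
  have hftc : ∫ s in a..b, fderiv ℝ φ (x₀ + s • θ) θ = φ (x₀ + b • θ) - φ (x₀ + a • θ) :=
    intervalIntegral.integral_eq_sub_of_hasDerivAt (fun s _ => hd s) (hdc.intervalIntegrable _ _)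
  have hb0 : φ (x₀ + b • θ) = 0 := image_eq_zero_of_notMem_tsupport (hz b (le_abs_self b))
  have hi1 : IntervalIntegrable (fun s : ℝ => p * -fderiv ℝ φ (x₀ + s • θ) θ) volume a b :=
    (hdc.neg.intervalIntegrable _ _).const_mul p
  have hi2 : IntervalIntegrable (fun s : ℝ => (p - 1) * (s ^ (-β) / H)) volume a b :=
    ((intInt_rpow ha hab).div_const _).const_mul _
  calc H ^ (1 - p) ≤ H ^ (1 - p) * (p * φ (x₀ + a • θ) - (p - 1)) := by
        apply le_mul_of_one_le_right (by positivity)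
        nlinarith
    _ = ∫ s in a..b, H ^ (1 - p) * (p * -fderiv ℝ φ (x₀ + s • θ) θ - (p - 1) * (s ^ (-β) / H)) := by
        rw [intervalIntegral.integral_const_mul, intervalIntegral.integral_sub hi1 hi2,
          intervalIntegral.integral_const_mul, intervalIntegral.integral_const_mul,
          intervalIntegral.integral_neg, intervalIntegral.integral_div, hftc, hb0, ← hH,
          div_self hHpos.ne']
        ring
    _ ≤ ∫ s in a..b, s ^ (N - 1) * ‖fderiv ℝ φ (x₀ + s • θ)‖ ^ p := by
        apply intervalIntegral.integral_mono_on hab.le ((hi1.sub hi2).const_mul _)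
          (hcont.intervalIntegrable _ _)
        intro s hs
        refine le_trans ?_ (tangent_ineq (N - 1) p β s H _ hp hβ (by linarith [hs.1]) hHpos
          (norm_nonneg _))
        gcongr
        calc _ ≤ ‖fderiv ℝ φ (x₀ + s • θ) θ‖ := neg_le_abs _
          _ ≤ ‖fderiv ℝ φ (x₀ + s • θ)‖ * ‖θ‖ := ContinuousLinearMap.le_opNorm _ _
          _ = _ := by rw [hθ, mul_one]
    _ ≤ _ := by
        rw [intervalIntegral.integral_of_le hab.le]
        apply setIntegral_mono_set hint.integrableOn
        · filter_upwards [ae_restrict_mem measurableSet_Ioi] with s hs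
          exact mul_nonneg (pow_nonneg (le_of_lt hs) _) (by positivity)
        · exact LE.le.eventuallyLE fun s hs => ha.trans hs.1

open Set in
lemma lower_test (N : ℕ) (p β a b : ℝ) (hp : 1 < p)
    (hβ : β * (p - 1) = (N - 1 : ℕ)) (ha : 0 < a) (hab : a < b)
    (x₀ : EuclideanSpace ℝ (Fin N)) (φ : EuclideanSpace ℝ (Fin N) → ℝ)
    (hφ : ContDiff ℝ (⊤ : ℕ∞) φ) (hcs : HasCompactSupport φ) (hts : tsupport φ ⊆ Metric.ball x₀ b)
    (S : Set (Metric.sphere (0 : EuclideanSpace ℝ (Fin N)) 1)) (hS : MeasurableSet S)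
    (h1 : ∀ θ ∈ S, 1 ≤ φ (x₀ + a • (θ : EuclideanSpace ℝ (Fin N)))) (hN : 2 ≤ N) :
    (volume : Measure (EuclideanSpace ℝ (Fin N))).toSphere.real S *
      (∫ s in a..b, s ^ (-β)) ^ (1 - p) ≤ ∫ x, ‖fderiv ℝ φ x‖ ^ p := by
  have hNt : Nontrivial (EuclideanSpace ℝ (Fin N)) := by
    have : Nonempty (Fin N) := ⟨⟨0, by omega⟩⟩
    infer_instance
  let μ : Measure (EuclideanSpace ℝ (Fin N)) := volume
  let F : EuclideanSpace ℝ (Fin N) → ℝ := fun x => ‖fderiv ℝ φ (x₀ + x)‖ ^ p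
  have hcd : Continuous (fderiv ℝ φ) := hφ.continuous_fderiv (by simp)
  have hF0 : Integrable (fun x => ‖fderiv ℝ φ x‖ ^ p) := by
    apply (hcd.norm.rpow_const fun _ => Or.inr (by linarith)).integrable_of_hasCompactSupport
    apply HasCompactSupport.intro hcs
    intro x hx
    have : fderiv ℝ φ x = 0 := by
      by_contra hc
      exact hx (support_fderiv_subset ℝ hc)
    rw [this, norm_zero, Real.zero_rpow (by linarith)]
  have hF : Integrable F := hF0.comp_add_left x₀
  let G : Metric.sphere (0 : EuclideanSpace ℝ (Fin N)) 1 × Ioi (0:ℝ) → ℝ :=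
    fun q => F ((q.2 : ℝ) • (q.1 : EuclideanSpace ℝ (Fin N)))
  have hGF : ∀ x : ({0}ᶜ : Set (EuclideanSpace ℝ (Fin N))),
      G (homeomorphUnitSphereProd _ x) = F x := by
    intro x
    have hx : ‖(x : EuclideanSpace ℝ (Fin N))‖ ≠ 0 := by
      exact norm_ne_zero_iff.2 x.2
    simp [G, smul_smul, hx]
  have hmp := μ.measurePreserving_homeomorphUnitSphereProd
  have hfr : Module.finrank ℝ (EuclideanSpace ℝ (Fin N)) = N := by simp
  rw [hfr] at hmp
  have hG : Integrable G (μ.toSphere.prod (.volumeIoiPow (N - 1))) := by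
    rw [← hmp.integrable_comp_emb (Homeomorph.measurableEmbedding _)]
    have : (G ∘ homeomorphUnitSphereProd _) = F ∘ Subtype.val := funext hGF
    rw [this, ← integrableOn_iff_comap_subtypeVal (measurableSet_singleton _).compl]
    exact hF.integrableOn
  have hinner : ∀ θ : Metric.sphere (0 : EuclideanSpace ℝ (Fin N)) 1,
      ∫ s, G (θ, s) ∂(.volumeIoiPow (N - 1)) =
        ∫ s in Ioi (0:ℝ), s ^ (N - 1) * ‖fderiv ℝ φ (x₀ + s • (θ : EuclideanSpace ℝ (Fin N)))‖ ^ p := by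
    intro θ
    simp only [Measure.volumeIoiPow, ENNReal.ofReal]
    rw [integral_withDensity_eq_integral_smul]
    · rw [integral_subtype_comap measurableSet_Ioi
        fun s : ℝ => Real.toNNReal (s ^ (N - 1)) • F (s • (θ : EuclideanSpace ℝ (Fin N)))]
      apply setIntegral_congr_fun measurableSet_Ioi
      intro s hs
      simp only [F]
      rw [NNReal.smul_def, Real.coe_toNNReal _ (pow_nonneg (le_of_lt hs) _), smul_eq_mul]
    · exact (measurable_subtype_coe.pow_const _).real_toNNReal
  calc μ.toSphere.real S * (∫ s in a..b, s ^ (-β)) ^ (1 - p)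
      = ∫ θ in S, (∫ s in a..b, s ^ (-β)) ^ (1 - p) ∂μ.toSphere := by simp
    _ ≤ ∫ θ in S, ∫ s, G (θ, s) ∂(.volumeIoiPow (N - 1)) ∂μ.toSphere := by
        apply setIntegral_mono_on (integrable_const _) hG.integral_prod_left.integrableOn hS
        intro θ hθ
        rw [hinner]
        exact ray_lower N p β a b hp hβ ha hab x₀ θ (by simp) φ hφ hts (h1 θ hθ)
    _ ≤ ∫ θ, ∫ s, G (θ, s) ∂(.volumeIoiPow (N - 1)) ∂μ.toSphere := by
        apply setIntegral_le_integral hG.integral_prod_left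
        refine Eventually.of_forall fun θ => ?_
        exact integral_nonneg fun s => by simp only [G, F]; positivity
    _ = ∫ q, G q ∂(μ.toSphere.prod (.volumeIoiPow (N - 1))) := (integral_prod _ hG).symm
    _ = ∫ x : ({0}ᶜ : Set (EuclideanSpace ℝ (Fin N))), F x ∂(μ.comap (↑)) := by
        rw [← hmp.integral_comp (Homeomorph.measurableEmbedding _)]
        exact integral_congr_ae (Eventually.of_forall hGF)
    _ = ∫ x, F x := by
        rw [integral_subtype_comap (measurableSet_singleton _).compl F, restrict_compl_singleton]
    _ = _ := integral_add_left_eq_self (fun x => ‖fderiv ℝ φ x‖ ^ p) x₀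

open Set Pointwise in
lemma half_sphere (N : ℕ) (x₀ : EuclideanSpace ℝ (Fin N)) :
    (N * volume.real (Metric.ball (0 : EuclideanSpace ℝ (Fin N)) 1)) / 2 ≤
    (volume : Measure (EuclideanSpace ℝ (Fin N))).toSphere.real
      {θ | 0 ≤ inner ℝ x₀ (θ : EuclideanSpace ℝ (Fin N))} := by
  let μ : Measure (EuclideanSpace ℝ (Fin N)) := volume
  let S : Set (Metric.sphere (0 : EuclideanSpace ℝ (Fin N)) 1) :=
    {θ | 0 ≤ inner ℝ x₀ (θ : EuclideanSpace ℝ (Fin N))}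
  let T : Set (Metric.sphere (0 : EuclideanSpace ℝ (Fin N)) 1) :=
    {θ | inner ℝ x₀ (θ : EuclideanSpace ℝ (Fin N)) ≤ 0}
  have hS : MeasurableSet S := (isClosed_le continuous_const (by fun_prop)).measurableSet
  have hT : MeasurableSet T := (isClosed_le (by fun_prop) continuous_const).measurableSet
  have hST : μ.toSphere T = μ.toSphere S := by
    rw [μ.toSphere_apply' hS, μ.toSphere_apply' hT, ← Measure.measure_neg μ]
    congr 2
    ext x
    simp only [Set.mem_neg, Set.mem_smul, mem_image]
    constructor
    · rintro ⟨t, ht, _, ⟨θ, hθ, rfl⟩, h⟩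
      refine ⟨t, ht, _, ⟨-θ, ?_, rfl⟩, ?_⟩
      · simpa [S, T] using hθ
      · simp [h]
    · rintro ⟨t, ht, _, ⟨θ, hθ, rfl⟩, h⟩
      refine ⟨t, ht, _, ⟨-θ, ?_, rfl⟩, ?_⟩
      · simpa [S, T] using hθ
      · simp [h]
  have hU : S ∪ T = univ := by
    ext θ; simp [S, T, le_total]
  have h1 : μ.toSphere.real univ ≤ μ.toSphere.real S + μ.toSphere.real T := by
    rw [← hU]; exact measureReal_union_le _ _
  have h2 : μ.toSphere.real T = μ.toSphere.real S := by simp [measureReal_def, hST]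
  rw [Measure.toSphere_real_apply_univ, h2] at h1
  simp only [finrank_euclideanSpace, Fintype.card_fin] at h1
  change _ ≤ μ.toSphere.real S
  change _ * μ.real _ / 2 ≤ _
  linarith

lemma pCapacity_bdd {N : ℕ} (p : ℝ) (K E : Set (EuclideanSpace ℝ (Fin N))) :
    BddBelow {c : ℝ | ∃ φ : EuclideanSpace ℝ (Fin N) → ℝ, ContDiff ℝ (⊤ : ℕ∞) φ ∧
    HasCompactSupport φ ∧
    tsupport φ ⊆ E ∧ (∀ x ∈ K, 1 ≤ φ x) ∧ c = ∫ x, ‖fderiv ℝ φ x‖ ^ p} := by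
  refine ⟨0, ?_⟩
  rintro c ⟨φ, _, _, _, _, rfl⟩
  exact integral_nonneg fun x => by positivity

lemma pCapacity_nonneg {N : ℕ} (p : ℝ) (K E : Set (EuclideanSpace ℝ (Fin N))) :
    0 ≤ pCapacity p K E := by
  apply Real.sInf_nonneg
  rintro c ⟨φ, _, _, _, _, rfl⟩
  exact integral_nonneg fun x => by positivity

lemma cap_le (N : ℕ) (p β a b : ℝ) (hN : 2 ≤ N) (hp : 1 < p) (hβ1 : β < 1)
    (hβ : β * (p - 1) = (N - 1 : ℕ)) (ha : 0 ≤ a) (hab : a < b) (x₀ : EuclideanSpace ℝ (Fin N))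
    (K : Set (EuclideanSpace ℝ (Fin N))) (hK : K ⊆ Metric.closedBall x₀ a) :
    pCapacity p K (Metric.ball x₀ b) ≤
      (N * volume.real (Metric.ball (0 : EuclideanSpace ℝ (Fin N)) 1)) *
          ((b ^ (-β + 1) - a ^ (-β + 1)) / (-β + 1)) ^ (1 - p) := by
  have hα : 0 < -β + 1 := by linarith
  have hlim : Tendsto (fun δ : ℝ => (N * volume.real (Metric.ball (0 : EuclideanSpace ℝ (Fin N)) 1)) *
      (((b - δ) ^ (-β + 1) - (a + δ) ^ (-β + 1)) / (-β + 1)) ^ (1 - p)) (nhdsWithin 0 (Set.Ioi 0))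
      (nhds ((N * volume.real (Metric.ball (0 : EuclideanSpace ℝ (Fin N)) 1)) *
          ((b ^ (-β + 1) - a ^ (-β + 1)) / (-β + 1)) ^ (1 - p))) := by
    have hc : ContinuousAt (fun δ : ℝ =>
        (N * volume.real (Metric.ball (0 : EuclideanSpace ℝ (Fin N)) 1)) *
      (((b - δ) ^ (-β + 1) - (a + δ) ^ (-β + 1)) / (-β + 1)) ^ (1 - p)) 0 := by
      apply ContinuousAt.mul continuousAt_const
      apply ContinuousAt.rpow_const
      · apply ContinuousAt.div_const
        apply ContinuousAt.sub
        · exact ContinuousAt.rpow_const (by fun_prop) (Or.inr hα.le)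
        · exact ContinuousAt.rpow_const (by fun_prop) (Or.inr hα.le)
      · left
        have := Real.rpow_lt_rpow ha hab hα
        simp only [sub_zero, add_zero]
        exact (div_pos (by linarith) hα).ne'
    have := hc.tendsto.mono_left (nhdsWithin_le_nhds (s := Set.Ioi 0))
    simpa using this
  refine ge_of_tendsto hlim ?_
  filter_upwards [Ioo_mem_nhdsGT (show (0:ℝ) < (b - a) / 2 by linarith)] with δ hδ
  obtain ⟨φ, h1, h2, h3, h4, h5⟩ := upper_test N p β a b δ hN hp hβ ha hδ.1 (by linarith [hδ.2]) x₀
  rw [integral_rpow (Or.inl (by linarith))] at h5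
  refine le_trans (csInf_le (pCapacity_bdd p _ _) ⟨φ, h1, h2, h3, fun x hx => h4 x (hK hx), rfl⟩) h5

lemma le_cap (N : ℕ) (p β a b : ℝ) (hN : 2 ≤ N) (hp : 1 < p) (hβ1 : β < 1)
    (hβ : β * (p - 1) = (N - 1 : ℕ)) (ha : 0 < a) (hab : a < b) (x₀ : EuclideanSpace ℝ (Fin N))
    (K : Set (EuclideanSpace ℝ (Fin N))) (hK : K ⊆ Metric.closedBall x₀ a)
    (S : Set (Metric.sphere (0 : EuclideanSpace ℝ (Fin N)) 1)) (hS : MeasurableSet S)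
    (h1 : ∀ θ ∈ S, x₀ + a • (θ : EuclideanSpace ℝ (Fin N)) ∈ K) :
    (volume : Measure (EuclideanSpace ℝ (Fin N))).toSphere.real S *
          ((b ^ (-β + 1) - a ^ (-β + 1)) / (-β + 1)) ^ (1 - p) ≤
    pCapacity p K (Metric.ball x₀ b) := by
  apply le_csInf
  · obtain ⟨φ, h1, h2, h3, h4, h5⟩ := upper_test N p β a b ((b - a) / 4) hN hp hβ ha.le
      (by linarith) (by linarith) x₀
    exact ⟨_, φ, h1, h2, h3, fun x hx => h4 x (hK hx), rfl⟩
  · rintro c ⟨φ, h2, h3, h4, h5, rfl⟩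
    have := lower_test N p β a b hp hβ ha hab x₀ φ h2 h3 h4 S hS (fun θ hθ => h5 _ (h1 θ hθ)) hN
    rwa [integral_rpow (Or.inl (by linarith))] at this

lemma eInradius_punctured (N : ℕ) (R : ℝ) (hN : 2 ≤ N) (hR : 0 < R) :
    eInradius (Metric.ball (0 : EuclideanSpace ℝ (Fin N)) R \ {0}) = ENNReal.ofReal (R / 2) := by
  have hNt : Nontrivial (EuclideanSpace ℝ (Fin N)) := by
    have : Nonempty (Fin N) := ⟨⟨0, by omega⟩⟩
    infer_instance
  apply le_antisymm
  · apply sSup_le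
    rintro ρ ⟨r, hr, rfl, x₀, hx⟩
    apply ENNReal.ofReal_le_ofReal
    have h0 : r ≤ ‖x₀‖ := by
      by_contra hc
      have : (0 : EuclideanSpace ℝ (Fin N)) ∈ Metric.ball x₀ r := by
        simpa using hc
      exact (hx this).2 rfl
    have hpos : 0 < ‖x₀‖ := hr.trans_le h0
    by_contra hc
    push Not at hc
    set t := (r + R / 2) / 2 with ht
    have hmem : (1 + t / ‖x₀‖) • x₀ ∈ Metric.ball x₀ r := by
      rw [Metric.mem_ball, dist_eq_norm, add_smul, one_smul, add_sub_cancel_left, norm_smul,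
        Real.norm_of_nonneg (by positivity), div_mul_cancel₀ _ hpos.ne']
      linarith
    have h2 := (hx hmem).1
    rw [mem_ball_zero_iff, norm_smul, Real.norm_of_nonneg (by positivity), add_mul, one_mul,
      div_mul_cancel₀ _ hpos.ne'] at h2
    linarith
  · obtain ⟨e, he⟩ := exists_norm_eq (EuclideanSpace ℝ (Fin N)) (show 0 ≤ R / 2 by positivity)
    apply le_sSup
    refine ⟨R / 2, by positivity, rfl, e, ?_⟩
    intro x hx
    rw [Metric.mem_ball, dist_eq_norm] at hx
    constructor
    · rw [mem_ball_zero_iff]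
      have := norm_sub_norm_le x e
      linarith
    · rintro rfl
      rw [zero_sub, norm_neg, he] at hx
      exact lt_irrefl _ hx

/-- Optimality of the threshold `γ₀` in the superconformal range: for the punctured ball
`Ḃ_R = B_R \ {0}`, the classical inradius is `R/2`, while `R_{p,γ₀}(Ḃ_R) = R`; in
particular `R_{p,γ}(Ḃ_R) > r_{Ḃ_R}` for every `γ₀ ≤ γ < 1`. -/
theorem punctured_ball_threshold (N : ℕ) (p R γ₀ : ℝ)
    (hN : 2 ≤ N) (hp : (N:ℝ) < p) (hR : 0 < R)
    (hγ₀ : γ₀ = 2 ^ ((N:ℝ) - p) * (2 ^ ((p - (N:ℝ)) / (p - 1)) - 1) ^ (p - 1)) :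
    eInradius (Metric.ball (0 : EuclideanSpace ℝ (Fin N)) R \ {0}) = ENNReal.ofReal (R / 2) ∧
    capInradius p γ₀ (Metric.ball (0 : EuclideanSpace ℝ (Fin N)) R \ {0}) = ENNReal.ofReal R ∧
    ∀ γ : ℝ, γ₀ ≤ γ → γ < 1 →
      eInradius (Metric.ball (0 : EuclideanSpace ℝ (Fin N)) R \ {0}) <
        capInradius p γ (Metric.ball (0 : EuclideanSpace ℝ (Fin N)) R \ {0}) := by
  have hN' : (2:ℝ) ≤ N := by exact_mod_cast hN
  have hp1 : 2 < p := by linarith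
  have hp1' : 1 < p := by linarith
  set β : ℝ := (N - 1) / (p - 1) with hβdef
  have hp10 : p - 1 ≠ 0 := by linarith
  have hβ : β * (p - 1) = (N - 1 : ℕ) := by
    rw [hβdef, div_mul_cancel₀ _ hp10, Nat.cast_sub (by omega)]; simp
  have hβ1 : β < 1 := by rw [hβdef, div_lt_one (by linarith)]; linarith
  have hβ0 : 0 < β := by rw [hβdef]; exact div_pos (by linarith) (by linarith)
  set α : ℝ := -β + 1 with hα
  have hαpos : 0 < α := by linarith
  have hα1 : α < 1 := by linarith
  have hαeq : (p - N) / (p - 1) = α := by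
    rw [hα, hβdef]; field_simp; ring
  set q : ℝ := 2 ^ α with hq
  have hq1 : 1 < q := Real.one_lt_rpow (by norm_num) hαpos
  have hq2 : q < 2 := by
    calc q < 2 ^ (1:ℝ) := Real.rpow_lt_rpow_of_exponent_lt (by norm_num) hα1
      _ = 2 := Real.rpow_one 2
  have hγ : γ₀ = ((q - 1) / q) ^ (p - 1) := by
    have hqp : q ^ (p - 1) = 2 ^ (p - (N:ℝ)) := by
      rw [hq, ← Real.rpow_mul (by norm_num), ← hαeq, div_mul_cancel₀ _ hp10]
    have h2 : (2:ℝ) ^ ((N:ℝ) - p) = (2 ^ (p - (N:ℝ)))⁻¹ := by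
      rw [← Real.rpow_neg (by norm_num), neg_sub]
    rw [hγ₀, hαeq, ← hq, Real.div_rpow (by linarith) (by linarith), hqp, h2, div_eq_mul_inv,
      mul_comm]
  have hx0 : 0 < (q - 1) / q := div_pos (by linarith) (by linarith)
  have hx1 : (q - 1) / q < 1 / 2 := by
    rw [div_lt_div_iff₀ (by linarith) (by norm_num)]; linarith
  have hγpos : 0 < γ₀ := by rw [hγ]; exact Real.rpow_pos_of_pos hx0 _
  have hγhalf : γ₀ < 1 / 2 := by
    rw [hγ]
    refine lt_of_le_of_lt ?_ hx1
    calc _ ≤ ((q - 1) / q) ^ (1:ℝ) :=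
          Real.rpow_le_rpow_of_exponent_ge hx0 (by linarith) (by linarith)
      _ = _ := Real.rpow_one _
  set A : ℝ := N * volume.real (Metric.ball (0 : EuclideanSpace ℝ (Fin N)) 1) with hA
  have hApos : 0 < A := by
    apply mul_pos (by linarith)
    exact ENNReal.toReal_pos (Metric.measure_ball_pos volume _ one_pos).ne' measure_ball_lt_top.ne
  have hrq : ∀ r : ℝ, 0 < r → (2 * r) ^ α = q * r ^ α := fun r hr =>
    Real.mul_rpow (by norm_num) hr.le
  -- the lower bound on the capacitary inradius
  have hlow : ∀ γ, γ₀ ≤ γ → ENNReal.ofReal R ≤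
      capInradius p γ (Metric.ball (0 : EuclideanSpace ℝ (Fin N)) R \ {0}) := by
    intro γ hγγ
    have key : ∀ r, 0 < r → r < R → ENNReal.ofReal r ≤
        capInradius p γ (Metric.ball (0 : EuclideanSpace ℝ (Fin N)) R \ {0}) := by
      intro r hr hrR
      apply le_sSup
      refine ⟨r, hr, rfl, 0, ?_⟩
      unfold IsNegligible
      have hset : Metric.closedBall (0 : EuclideanSpace ℝ (Fin N)) r \
          (Metric.ball (0 : EuclideanSpace ℝ (Fin N)) R \ {0}) ⊆ Metric.closedBall 0 0 := by
        intro x hx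
        by_contra hc
        rw [Metric.closedBall_zero] at hc
        refine hx.2 ⟨?_, hc⟩
        exact Metric.closedBall_subset_ball hrR hx.1
      have h1 := cap_le N p β 0 (2 * r) hN hp1' hβ1 hβ le_rfl (by linarith) 0 _ hset
      have h2 := le_cap N p β r (2 * r) hN hp1' hβ1 hβ hr (by linarith) 0
        (Metric.closedBall 0 r) le_rfl Set.univ MeasurableSet.univ (by
          intro θ _
          simp [norm_smul, abs_of_pos hr])
      rw [Measure.toSphere_real_apply_univ, finrank_euclideanSpace, Fintype.card_fin] at h2
      rw [← hα, ← hA, hrq r hr] at h1 h2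
      rw [Real.zero_rpow hαpos.ne', sub_zero] at h1
      have hra : 0 < r ^ α := Real.rpow_pos_of_pos hr _
      refine h1.trans (le_trans ?_ (mul_le_mul hγγ h2 (by
        have : 0 ≤ (q * r ^ α - r ^ α) / α := div_nonneg (by nlinarith) hαpos.le
        positivity) (by linarith)))
      apply le_of_eq
      have hD : (q * r ^ α - r ^ α) / α = (q * r ^ α / α) * ((q - 1) / q) := by
        field_simp
      rw [hD, Real.mul_rpow (by positivity) hx0.le, hγ]
      have : ((q - 1) / q) ^ (p - 1) * ((q - 1) / q) ^ (1 - p) = 1 := by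
        rw [← Real.rpow_add hx0]; simp
      linear_combination (-A * (q * r ^ α / α) ^ (1 - p)) * this
    have hlim : Tendsto ENNReal.ofReal (nhdsWithin R (Set.Iio R)) (nhds (ENNReal.ofReal R)) :=
      ENNReal.continuous_ofReal.continuousAt.tendsto.mono_left nhdsWithin_le_nhds
    refine le_of_tendsto hlim ?_
    filter_upwards [Ioo_mem_nhdsLT hR] with r hr
    exact key r hr.1 hr.2
  have he := eInradius_punctured N R hN hR
  refine ⟨he, le_antisymm ?_ (hlow γ₀ le_rfl), ?_⟩
  · apply sSup_le
    rintro ρ ⟨r, hr, rfl, x₀, hneg⟩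
    apply ENNReal.ofReal_le_ofReal
    by_contra hc
    push Not at hc
    unfold IsNegligible at hneg
    have hra : 0 < r ^ α := Real.rpow_pos_of_pos hr _
    have hH : 0 < (((2 * r) ^ α - r ^ α) / α) ^ (1 - p) := by
      apply Real.rpow_pos_of_pos
      rw [hrq r hr]
      exact div_pos (by nlinarith) hαpos
    have h1 := cap_le N p β r (2 * r) hN hp1' hβ1 hβ hr.le (by linarith) x₀ _
      (le_refl (Metric.closedBall x₀ r))
    have h2 := le_cap N p β r (2 * r) hN hp1' hβ1 hβ hr (by linarith) x₀
        (Metric.closedBall x₀ r \ (Metric.ball (0 : EuclideanSpace ℝ (Fin N)) R \ {0}))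
        Set.sdiff_subset {θ | 0 ≤ inner ℝ x₀ (θ : EuclideanSpace ℝ (Fin N))}
        (isClosed_le continuous_const (by fun_prop)).measurableSet (by
          intro θ hθ
          have hθ : 0 ≤ inner ℝ x₀ (θ : EuclideanSpace ℝ (Fin N)) := hθ
          refine ⟨by simp [norm_smul, abs_of_pos hr], fun hc2 => ?_⟩
          have h3 := hc2.1
          rw [mem_ball_zero_iff] at h3
          have h4 := norm_add_sq_real x₀ (r • (θ : EuclideanSpace ℝ (Fin N)))
          rw [inner_smul_right, norm_smul, Real.norm_of_nonneg hr.le,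
            norm_eq_of_mem_sphere θ, mul_one] at h4
          have h5 : 0 ≤ r * inner ℝ x₀ (θ : EuclideanSpace ℝ (Fin N)) := mul_nonneg hr.le hθ
          have h6 := norm_nonneg (x₀ + r • (θ : EuclideanSpace ℝ (Fin N)))
          nlinarith [sq_nonneg ‖x₀‖])
    have h3 := half_sphere N x₀
    rw [← hα] at h1 h2
    rw [← hA] at h1 h3
    have h4 := mul_le_mul_of_nonneg_right h3 hH.le
    have h5 := mul_le_mul_of_nonneg_left h1 hγpos.le
    have h6 := mul_pos hApos hH
    nlinarith
  · intro γ h1 _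
    rw [he]
    refine lt_of_lt_of_le ?_ (hlow γ h1)
    rw [ENNReal.ofReal_lt_ofReal_iff hR]
    linarith
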